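/- Let N ≥ 3 and 0 < m < (N-2)/N. Let u and v be two solutions of the fast diffusion equation on ℝ^N × (0,T) with initial values u₀ and v₀ such that u₀ - v₀ ∈ L¹(ℝ^N). Assume in addition that u(x,t) ≥ B_k(x,t) and v(x,t) ≥ B_k(x,t) for all (x,t) ∈ ℝ^N × (0,T), for some Barenblatt solution B_k with extinction time T. Then for every t ∈ [0,T), ∫_{ℝ^N} |u(x,t) - v(x,t)| dx ≤ ∫_{ℝ^N} |u₀(x) - v₀(x)| dx. -/

import Mathlib

/-!
The difference of the two equations is tested against cutoffs of a superharmonic function.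

For a `C²` function `0 ≤ ψ ≤ 1` with compact support and `Δψ ≤ K ψ^m`, put
`X(t) = ∫ |u(·,t) - v(·,t)| ψ`. Kato's inequality (`kato`), applied to `u^m - v^m`, which has the sign
of `u - v`, gives `X' ≤ ∫ |u^m - v^m| Δψ ≤ K ∫ |u - v|^m ψ^m`, because `|a^m - b^m| ≤ |a - b|^m`. By
Young's inequality with a free parameter `l > 0`, the right-hand side is at most
`m l X + (1 - m) (K l^(-m))^(1/(1-m)) |supp ψ|` (`slice_estimate`), and integration in time bounds
`X(t) (1 - m l t)` by `X(0)` plus `t` times the last term (`sol_bound`).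

It remains to find test functions close to `1` on large balls for which `K^(1/(1-m)) |supp ψ|` is
arbitrarily small (`exists_test`). With `p = (N-2)/2` and `y = 1 + e|x|²`, the function `y^(-p)` is
superharmonic, and the test function is `y^(-p) (1 - (y/M)^N)₊^(k+3)`. Its Laplacian can only be
positive through derivatives of the cutoff, which gives `K` of order `M^(-(p+1) + pm)`
(`radial_le`, `isTest_Hf`). The support has volume of order `M^(p+1)`, so
`K^(1/(1-m)) |supp ψ|` is of order `M^(1 - 1/(1-m))`, which tends to `0` as `M → ∞`.
Letting `M → ∞`, `e → 0` and `l → 0` gives the contraction on every ball (`ball_bound`), and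
monotone convergence finishes the proof.
-/

open MeasureTheory Real Filter Topology RealInnerProductSpace

noncomputable section

abbrev Euc (N : ℕ) := EuclideanSpace ℝ (Fin N)

/-- Laplacian: trace of the second derivative. -/
def lapl {N : ℕ} (f : Euc N → ℝ) (x : Euc N) : ℝ :=
  ∑ i : Fin N, iteratedFDeriv ℝ 2 f x ![EuclideanSpace.single i 1, EuclideanSpace.single i 1]

/-- The constant C* = 2m(N-2-mN)/(1-m). -/
def Cst (N : ℕ) (m : ℝ) : ℝ := 2 * m * ((N : ℝ) - 2 - m * N) / (1 - m)

/-- β = N/(N-2-Nm). -/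
def betaC (N : ℕ) (m : ℝ) : ℝ := (N : ℝ) / ((N : ℝ) - 2 - N * m)

/-- γ = -β/N. -/
def gammaC (N : ℕ) (m : ℝ) : ℝ := -betaC N m / N

/-- Barenblatt solution with extinction time T. -/
def Bb (N : ℕ) (m T k : ℝ) (x : Euc N) (t : ℝ) : ℝ :=
  (Cst N m * (T - t) / (k * (T - t) ^ (2 * gammaC N m) + ‖x‖ ^ 2)) ^ (1 / (1 - m))

/-- Rescaled Barenblatt profile. -/
def BbTil (N : ℕ) (m k : ℝ) (x : Euc N) : ℝ :=
  (Cst N m / (k + ‖x‖ ^ 2)) ^ (1 / (1 - m))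

/-- u is a solution of the fast diffusion equation on ℝ^N × (0,T) with initial value u₀. -/
def IsFDESol (N : ℕ) (m T : ℝ) (u : Euc N → ℝ → ℝ) (u₀ : Euc N → ℝ) : Prop :=
  (∀ x : Euc N, ∀ t ∈ Set.Ioo (0:ℝ) T, 0 < u x t) ∧
  ContDiffOn ℝ (⊤ : ℕ∞) (fun p : Euc N × ℝ => u p.1 p.2) (Set.univ ×ˢ Set.Ioo (0:ℝ) T) ∧
  ContinuousOn (fun p : Euc N × ℝ => u p.1 p.2) (Set.univ ×ˢ Set.Ico (0:ℝ) T) ∧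
  (∀ x, u x 0 = u₀ x) ∧
  (∀ x : Euc N, ∀ t ∈ Set.Ioo (0:ℝ) T,
    deriv (fun s => u x s) t = lapl (fun y => u y t ^ m) x)

/-- Rescaled solution ũ(x,τ) = (T-t)^(-β) u(x (T-t)^γ, t), τ = -log(T-t). -/
def rescaleSol (N : ℕ) (m T : ℝ) (u : Euc N → ℝ → ℝ) (x : Euc N) (τ : ℝ) : ℝ :=
  Real.exp (betaC N m * τ) * u (Real.exp (-gammaC N m * τ) • x) (T - Real.exp (-τ))

/-- f is radially symmetric. -/
def IsRadial {N : ℕ} (f : Euc N → ℝ) : Prop := ∀ x y : Euc N, ‖x‖ = ‖y‖ → f x = f y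


/-! ### Calculus for the Laplacian -/

/-- The `i`-th partial derivative of `f`. -/
def pd {N : ℕ} (i : Fin N) (f : Euc N → ℝ) (x : Euc N) : ℝ :=
  fderiv ℝ f x (EuclideanSpace.single i 1)

lemma contDiff_pd {N : ℕ} {n n' : WithTop ℕ∞} {f : Euc N → ℝ} (i : Fin N) (hf : ContDiff ℝ n f)
    (hn : n' + 1 ≤ n) : ContDiff ℝ n' (pd i f) :=
  (hf.fderiv_right hn).clm_apply contDiff_const

lemma lapl_eq_sum_pd {N : ℕ} {f : Euc N → ℝ} (hf : ContDiff ℝ 2 f) (x : Euc N) :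
    lapl f x = ∑ i, pd i (pd i f) x := by
  unfold lapl
  refine Finset.sum_congr rfl fun i _ => ?_
  rw [iteratedFDeriv_two_apply]
  have hd : DifferentiableAt ℝ (fderiv ℝ f) x :=
    ((hf.fderiv_right (m := 1) (by norm_num)).differentiable (by norm_num)) x
  simp only [Matrix.cons_val_zero, Matrix.cons_val_one]
  have : pd i f = fun y => fderiv ℝ f y (EuclideanSpace.single i 1) := rfl
  conv_rhs => rw [pd, this, fderiv_clm_apply hd (differentiableAt_const _)]
  simp

lemma continuous_lapl {N : ℕ} {f : Euc N → ℝ} (hf : ContDiff ℝ 2 f) : Continuous (lapl f) := by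
  rw [show lapl f = fun x => ∑ i, pd i (pd i f) x from funext (lapl_eq_sum_pd hf)]
  refine continuous_finsetSum _ fun i _ => ?_
  exact (contDiff_pd (n' := 0) i (contDiff_pd (n' := 1) i hf (by norm_num)) (by norm_num)).continuous

lemma lapl_sub {N : ℕ} {f g : Euc N → ℝ} (hf : ContDiff ℝ 2 f) (hg : ContDiff ℝ 2 g)
    (x : Euc N) : lapl (fun y => f y - g y) x = lapl f x - lapl g x := by
  unfold lapl
  rw [← Finset.sum_sub_distrib]
  refine Finset.sum_congr rfl fun i _ => ?_
  have : (fun y => f y - g y) = f - g := rfl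
  rw [this, iteratedFDeriv_sub_apply hf.contDiffAt hg.contDiffAt]
  rfl

lemma tsupport_pd_subset {N : ℕ} (i : Fin N) (f : Euc N → ℝ) : tsupport (pd i f) ⊆ tsupport f := by
  refine closure_minimal (fun x hx => ?_) (isClosed_tsupport f)
  by_contra h
  apply hx
  have : fderiv ℝ f x = 0 := by
    by_contra h'
    exact h (support_fderiv_subset ℝ h')
  simp [pd, this]

lemma hasCompactSupport_pd {N : ℕ} (i : Fin N) {f : Euc N → ℝ} (hf : HasCompactSupport f) :
    HasCompactSupport (pd i f) :=
  hf.of_isClosed_subset (isClosed_tsupport _) (tsupport_pd_subset i f)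

lemma lapl_eq_zero_of_notMem_tsupport {N : ℕ} {f : Euc N → ℝ} (hf : ContDiff ℝ 2 f) {x : Euc N}
    (hx : x ∉ tsupport f) : lapl f x = 0 := by
  rw [lapl_eq_sum_pd hf]
  refine Finset.sum_eq_zero fun i _ => ?_
  by_contra h
  exact hx (tsupport_pd_subset i f (tsupport_pd_subset i _ (subset_tsupport _ h)))

lemma integral_mul_pd {N : ℕ} (i : Fin N) {f g : Euc N → ℝ} (hf : ContDiff ℝ 1 f)
    (hg : ContDiff ℝ 1 g) (hc : HasCompactSupport g) :
    ∫ x, f x * pd i g x = - ∫ x, pd i f x * g x := by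
  have h1 : Continuous (pd i f) := (contDiff_pd (n' := 0) i hf (by norm_num)).continuous
  have h2 : Continuous (pd i g) := (contDiff_pd (n' := 0) i hg (by norm_num)).continuous
  exact integral_mul_fderiv_eq_neg_fderiv_mul_of_integrable
    ((h1.mul hg.continuous).integrable_of_hasCompactSupport hc.mul_left)
    ((hf.continuous.mul h2).integrable_of_hasCompactSupport (hasCompactSupport_pd i hc).mul_left)
    ((hf.continuous.mul hg.continuous).integrable_of_hasCompactSupport hc.mul_left)
    (fun x _ => hf.differentiable (by norm_num) x) (fun x _ => hg.differentiable (by norm_num) x)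

/-- Green's identity against a compactly supported function. -/
lemma integral_lapl_mul {N : ℕ} {f g : Euc N → ℝ} (hf : ContDiff ℝ 2 f)
    (hg : ContDiff ℝ 2 g) (hc : HasCompactSupport g) :
    ∫ x, lapl f x * g x = ∫ x, f x * lapl g x := by
  have hpf : ∀ i, ContDiff ℝ 1 (pd i f) := fun i => contDiff_pd i hf (by norm_num)
  have hpg : ∀ i, ContDiff ℝ 1 (pd i g) := fun i => contDiff_pd i hg (by norm_num)
  have hppf : ∀ i, Continuous (pd i (pd i f)) := fun i =>
    (contDiff_pd (n' := 0) i (hpf i) (by norm_num)).continuous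
  have hppg : ∀ i, Continuous (pd i (pd i g)) := fun i =>
    (contDiff_pd (n' := 0) i (hpg i) (by norm_num)).continuous
  simp_rw [lapl_eq_sum_pd hf, lapl_eq_sum_pd hg, Finset.sum_mul, Finset.mul_sum]
  have i1 : ∀ i ∈ Finset.univ, Integrable (fun x => pd i (pd i f) x * g x) volume := fun i _ =>
    ((hppf i).mul hg.continuous).integrable_of_hasCompactSupport hc.mul_left
  have i2 : ∀ i ∈ Finset.univ, Integrable (fun x => f x * pd i (pd i g) x) volume := fun i _ =>
    (hf.continuous.mul (hppg i)).integrable_of_hasCompactSupport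
      (hasCompactSupport_pd i (hasCompactSupport_pd i hc)).mul_left
  rw [integral_finsetSum _ i1, integral_finsetSum _ i2]
  refine Finset.sum_congr rfl fun i _ => ?_
  have e1 := integral_mul_pd i (hf.of_le (by norm_num)) (hpg i) (hasCompactSupport_pd i hc)
  have e2 := integral_mul_pd i (hpf i) (hg.of_le (by norm_num)) hc
  linarith

/-- Chain rule inequality: `Δ(J ∘ z) ≥ J'(z) Δz` for convex `J`. -/
lemma lapl_comp_ge {N : ℕ} {z : Euc N → ℝ} (hz : ContDiff ℝ 2 z) {J J1 J2 : ℝ → ℝ}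
    (hJ : ContDiff ℝ 2 J) (h1 : ∀ r, HasDerivAt J (J1 r) r) (h2 : ∀ r, HasDerivAt J1 (J2 r) r)
    (h3 : ∀ r, 0 ≤ J2 r) (x : Euc N) :
    lapl z x * J1 (z x) ≤ lapl (fun y => J (z y)) x := by
  have hJz : ContDiff ℝ 2 (fun y => J (z y)) := hJ.comp hz
  rw [lapl_eq_sum_pd hz, lapl_eq_sum_pd hJz, Finset.sum_mul]
  refine Finset.sum_le_sum fun i _ => ?_
  have hzd : ∀ y, HasFDerivAt z (fderiv ℝ z y) y := fun y =>
    (hz.differentiable (by norm_num) y).hasFDerivAt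
  have e1 : pd i (fun y => J (z y)) = fun y => J1 (z y) * pd i z y := by
    funext y
    have := ((h1 (z y)).comp_hasFDerivAt y (hzd y)).fderiv
    simp only [Function.comp_def] at this
    simp [pd, this]
  have hp : HasFDerivAt (pd i z) (fderiv ℝ (pd i z) x) x :=
    ((contDiff_pd (n' := 1) i hz (by norm_num)).differentiable (by norm_num) x).hasFDerivAt
  have e2 : pd i (pd i (fun y => J (z y))) x
      = J1 (z x) * pd i (pd i z) x + pd i z x * (J2 (z x) * pd i z x) := by
    rw [e1]
    have := (((h2 (z x)).comp_hasFDerivAt x (hzd x)).mul hp).fderiv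
    simp only [Function.comp_def, Pi.mul_def] at this
    rw [pd, this]
    simp [pd]
  rw [e2]
  nlinarith [mul_nonneg (h3 (z x)) (sq_nonneg (pd i z x))]

/-! ### Kato's inequality -/

/-- The sign of a real number, with value `0` at `0`. -/
def sg (a : ℝ) : ℝ := a / |a|

lemma abs_sg_le (a : ℝ) : |sg a| ≤ 1 := by
  unfold sg
  rw [abs_div, abs_abs]
  exact div_self_le_one _

/-- The regularized modulus `√(r² + δ)`. -/
def rabs (δ r : ℝ) : ℝ := √(r ^ 2 + δ)

lemma hasDerivAt_rabs {δ : ℝ} (hδ : 0 < δ) (r : ℝ) : HasDerivAt (rabs δ) (r / rabs δ r) r := by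
  have h : 0 < r ^ 2 + δ := by positivity
  have := (((hasDerivAt_id r).pow 2).add_const δ).sqrt (by simpa using h.ne')
  simp only [id] at this
  convert! this using 1
  unfold rabs
  have := (Real.sqrt_pos.2 h).ne'
  simp only [Pi.pow_apply, id]
  field_simp
  norm_num
  ring

lemma rabs_pos {δ : ℝ} (hδ : 0 < δ) (r : ℝ) : 0 < rabs δ r := Real.sqrt_pos.2 (by positivity)

lemma hasDerivAt_rabs_deriv {δ : ℝ} (hδ : 0 < δ) (r : ℝ) :
    HasDerivAt (fun r => r / rabs δ r) (δ / rabs δ r ^ 3) r := by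
  have h := rabs_pos hδ r
  have hs : rabs δ r ^ 2 = r ^ 2 + δ := Real.sq_sqrt (by positivity)
  convert! (hasDerivAt_id r).div (hasDerivAt_rabs hδ r) h.ne' using 1
  simp only [id]
  field_simp
  linarith

lemma contDiff_rabs {δ : ℝ} (hδ : 0 < δ) : ContDiff ℝ 2 (rabs δ) := by
  refine contDiff_iff_contDiffAt.2 fun r => ?_
  unfold rabs
  exact ContDiffAt.sqrt (by fun_prop) (by positivity)

lemma abs_le_rabs {δ : ℝ} (hδ : 0 < δ) (r : ℝ) : |r| ≤ rabs δ r :=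
  Real.abs_le_sqrt (by linarith)

lemma rabs_le {δ : ℝ} (h1 : δ ≤ 1) (r : ℝ) : rabs δ r ≤ √(r ^ 2 + 1) :=
  Real.sqrt_le_sqrt (by linarith)

lemma abs_div_rabs_le {δ : ℝ} (hδ : 0 < δ) (r : ℝ) : |r / rabs δ r| ≤ 1 := by
  rw [abs_div, abs_of_pos (rabs_pos hδ r)]
  exact div_le_one_of_le₀ (abs_le_rabs hδ r) (rabs_pos hδ r).le

lemma tendsto_rabs {δ : ℕ → ℝ} (hδ : Tendsto δ atTop (𝓝 0)) (r : ℝ) :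
    Tendsto (fun n => rabs (δ n) r) atTop (𝓝 |r|) := by
  have : Tendsto (fun n => √(r ^ 2 + δ n)) atTop (𝓝 √(r ^ 2 + 0)) :=
    (Real.continuous_sqrt.tendsto _).comp (tendsto_const_nhds.add hδ)
  simpa [Real.sqrt_sq_eq_abs, rabs] using this

lemma tendsto_div_rabs {δ : ℕ → ℝ} (hδ : Tendsto δ atTop (𝓝 0)) (r : ℝ) :
    Tendsto (fun n => r / rabs (δ n) r) atTop (𝓝 (sg r)) := by
  by_cases h : r = 0
  · simp [h, sg]
  · exact tendsto_const_nhds.div (tendsto_rabs hδ r) (abs_pos.2 h).ne'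

/-- A sequence of regularization parameters tending to `0` in `(0, 1]`. -/
def dl (n : ℕ) : ℝ := 1 / ((n : ℝ) + 1)

lemma dl_pos (n : ℕ) : 0 < dl n := by unfold dl; positivity
lemma dl_le (n : ℕ) : dl n ≤ 1 := by
  unfold dl
  rw [div_le_one (by positivity)]
  simp
lemma tendsto_dl : Tendsto dl atTop (𝓝 0) := tendsto_one_div_add_atTop_nhds_zero_nat

/-- Kato's inequality `sign(z) Δz ≤ Δ|z|`, tested against `ψ ≥ 0`. -/
lemma kato {N : ℕ} {z ψ : Euc N → ℝ} (hz : ContDiff ℝ 2 z) (hψ : ContDiff ℝ 2 ψ)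
    (hc : HasCompactSupport ψ) (h0 : ∀ x, 0 ≤ ψ x) :
    ∫ x, lapl z x * sg (z x) * ψ x ≤ ∫ x, |z x| * lapl ψ x := by
  have hcl : HasCompactSupport (lapl ψ) := by
    refine HasCompactSupport.intro hc fun x hx => lapl_eq_zero_of_notMem_tsupport hψ hx
  have cz := continuous_lapl hz
  have cψ := continuous_lapl hψ
  have crabs : ∀ n, Continuous (fun x => rabs (dl n) (z x)) := fun n =>
    (contDiff_rabs (dl_pos n)).continuous.comp hz.continuous
  have key : ∀ n, ∫ x, lapl z x * (z x / rabs (dl n) (z x)) * ψ x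
      ≤ ∫ x, rabs (dl n) (z x) * lapl ψ x := by
    intro n
    have hJ := contDiff_rabs (dl_pos n)
    have hcomp : ContDiff ℝ 2 (fun x => rabs (dl n) (z x)) := hJ.comp hz
    rw [← integral_lapl_mul hcomp hψ hc]
    refine integral_mono ?_ ?_ fun x => ?_
    · refine Continuous.integrable_of_hasCompactSupport ?_ hc.mul_left
      exact (cz.mul (hz.continuous.div (crabs n) fun x => (rabs_pos (dl_pos n) _).ne')).mul
        hψ.continuous
    · exact ((continuous_lapl hcomp).mul hψ.continuous).integrable_of_hasCompactSupport hc.mul_left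
    · refine mul_le_mul_of_nonneg_right ?_ (h0 x)
      exact lapl_comp_ge hz hJ (fun r => hasDerivAt_rabs (dl_pos n) r)
        (fun r => hasDerivAt_rabs_deriv (dl_pos n) r)
        (fun r => div_nonneg (dl_pos n).le (pow_pos (rabs_pos (dl_pos n) r) 3).le) x
  refine le_of_tendsto_of_tendsto' (b := atTop) ?_ ?_ key
  · refine tendsto_integral_of_dominated_convergence (fun x => |lapl z x| * ψ x) ?_ ?_ ?_ ?_
    · intro n
      refine Continuous.aestronglyMeasurable ?_
      exact (cz.mul (hz.continuous.div (crabs n) fun x => (rabs_pos (dl_pos n) _).ne')).mul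
        hψ.continuous
    · exact (cz.abs.mul hψ.continuous).integrable_of_hasCompactSupport hc.mul_left
    · refine fun n => ae_of_all _ fun x => ?_
      rw [Real.norm_eq_abs, abs_mul, abs_mul, abs_of_nonneg (h0 x)]
      have := abs_div_rabs_le (dl_pos n) (z x)
      have h' := h0 x
      gcongr
      exact mul_le_of_le_one_right (abs_nonneg _) this
    · refine ae_of_all _ fun x => ?_
      exact (tendsto_const_nhds.mul (tendsto_div_rabs tendsto_dl _)).mul tendsto_const_nhds
  · refine tendsto_integral_of_dominated_convergence
      (fun x => √((z x) ^ 2 + 1) * |lapl ψ x|) ?_ ?_ ?_ ?_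
    · exact fun n => ((crabs n).mul cψ).aestronglyMeasurable
    · refine Continuous.integrable_of_hasCompactSupport ?_ hcl.norm.mul_left
      have := hz.continuous
      exact (by fun_prop : Continuous fun x => √((z x) ^ 2 + 1)).mul cψ.abs
    · refine fun n => ae_of_all _ fun x => ?_
      rw [Real.norm_eq_abs, abs_mul, abs_of_pos (rabs_pos (dl_pos n) _)]
      have := rabs_le (dl_le n) (z x)
      gcongr
    · exact ae_of_all _ fun x => (tendsto_rabs tendsto_dl _).mul tendsto_const_nhds

/-! ### The estimate at a fixed time -/

/-- The nonlinearity `a ↦ a^m` is `m`-Hölder with constant `1`, by subadditivity. -/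
lemma abs_rpow_sub_rpow_le {m a b : ℝ} (hm0 : 0 < m) (hm1 : m < 1) (ha : 0 < a) (hb : 0 < b) :
    |a ^ m - b ^ m| ≤ |a - b| ^ m := by
  wlog h : b ≤ a generalizing a b
  · rw [abs_sub_comm, abs_sub_comm a b]
    exact this hb ha (by linarith)
  have h1 := Real.rpow_add_le_add_rpow hb.le (sub_nonneg.2 h) hm0.le hm1.le
  have h2 : b ^ m ≤ a ^ m := Real.rpow_le_rpow hb.le h hm0.le
  rw [abs_of_nonneg (by linarith), abs_of_nonneg (by linarith)]
  rw [add_sub_cancel] at h1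
  linarith

/-- Since `a ↦ a^m` is increasing, Kato's inequality for `u^m - v^m` controls the sign of `u - v`. -/
lemma sg_rpow_sub_rpow {m a b : ℝ} (hm0 : 0 < m) (ha : 0 < a) (hb : 0 < b) :
    sg (a ^ m - b ^ m) = sg (a - b) := by
  unfold sg
  rcases lt_trichotomy a b with h | h | h
  · have := Real.rpow_lt_rpow ha.le h hm0
    rw [abs_of_neg (by linarith), abs_of_neg (by linarith), div_neg, div_neg,
      div_self (by linarith), div_self (by linarith)]
  · simp [h]
  · have := Real.rpow_lt_rpow hb.le h hm0
    rw [abs_of_pos (by linarith), abs_of_pos (by linarith), div_self (by linarith),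
      div_self (by linarith)]

/-- Young's inequality with a free parameter `l`. -/
lemma young_param {m l K w p : ℝ} (hm0 : 0 < m) (hm1 : m < 1) (hl : 0 < l) (hK : 0 ≤ K)
    (hw : 0 ≤ w) (hp : 0 ≤ p) :
    w ^ m * (K * p ^ m) ≤ m * l * (w * p) + (1 - m) * (K * l ^ (-m)) ^ (1 / (1 - m)) := by
  have hlm : 0 ≤ l ^ (-m) := Real.rpow_nonneg hl.le _
  have h := Real.geom_mean_le_arith_mean2_weighted (w₁ := m) (w₂ := 1 - m) (p₁ := l * (w * p))
    (p₂ := (K * l ^ (-m)) ^ (1 / (1 - m))) hm0.le (by linarith) (by positivity)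
    (by positivity) (by ring)
  have e : ((K * l ^ (-m)) ^ (1 / (1 - m))) ^ (1 - m) = K * l ^ (-m) := by
    rw [← Real.rpow_mul (by positivity), one_div_mul_cancel (by linarith), Real.rpow_one]
  rw [e, Real.mul_rpow hl.le (by positivity), Real.mul_rpow hw hp] at h
  have e2 : l ^ m * l ^ (-m) = 1 := by rw [← Real.rpow_add hl]; simp
  calc w ^ m * (K * p ^ m) = l ^ m * l ^ (-m) * (w ^ m * (K * p ^ m)) := by rw [e2, one_mul]
    _ = l ^ m * (w ^ m * p ^ m) * (K * l ^ (-m)) := by ring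
    _ ≤ _ := by linarith

/-- Test functions: `C²`, supported in the ball of radius `ρ`, with values in `[0, 1]`, and with
`Δψ ≤ K ψ^m`. -/
structure IsTest {N : ℕ} (m K ρ : ℝ) (ψ : Euc N → ℝ) : Prop where
  contDiff : ContDiff ℝ 2 ψ
  supp : tsupport ψ ⊆ Metric.closedBall 0 ρ
  nonneg : ∀ x, 0 ≤ ψ x
  le_one : ∀ x, ψ x ≤ 1
  K_nonneg : 0 ≤ K
  lapl_le : ∀ x, lapl ψ x ≤ K * ψ x ^ m

/-- The additive error in the differential inequality for `∫ |u - v| ψ`: the constant term of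
`young_param`, with the free parameter `l`, integrated over the ball supporting `ψ`. -/
def errC (N : ℕ) (m l K ρ : ℝ) : ℝ :=
  (1 - m) * (K * l ^ (-m)) ^ (1 / (1 - m)) * volume.real (Metric.closedBall (0 : Euc N) ρ)

lemma IsTest.hasCompactSupport {N : ℕ} {m K ρ : ℝ} {ψ : Euc N → ℝ} (h : IsTest m K ρ ψ) :
    HasCompactSupport ψ :=
  (isCompact_closedBall (0 : Euc N) ρ).of_isClosed_subset (isClosed_tsupport _) h.supp

lemma IsTest.eq_zero {N : ℕ} {m K ρ : ℝ} {ψ : Euc N → ℝ} (h : IsTest m K ρ ψ) {x : Euc N}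
    (hx : x ∉ Metric.closedBall (0 : Euc N) ρ) : ψ x = 0 :=
  image_eq_zero_of_notMem_tsupport fun h' => hx (h.supp h')

/-- The differential inequality for `∫ |u - v| ψ` at a fixed time, with `U = u(·,t)` and
`V = v(·,t)`: the left-hand side is the time derivative. Kato's inequality puts the Laplacian on `ψ`,
and `|U^m - V^m| Δψ ≤ |U - V|^m K ψ^m` is then split by Young's inequality. -/
lemma slice_estimate {N : ℕ} {m K ρ l : ℝ} (hm0 : 0 < m) (hm1 : m < 1) (hl : 0 < l)
    {U V ψ : Euc N → ℝ} (hψ : IsTest m K ρ ψ) (hU : ContDiff ℝ 2 U) (hV : ContDiff ℝ 2 V)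
    (pU : ∀ x, 0 < U x) (pV : ∀ x, 0 < V x) :
    ∫ x, (lapl (fun y => U y ^ m) x - lapl (fun y => V y ^ m) x) * sg (U x - V x) * ψ x
      ≤ m * l * (∫ x, |U x - V x| * ψ x) + errC N m l K ρ := by
  have hUm : ContDiff ℝ 2 (fun y => U y ^ m) := hU.rpow_const_of_ne fun x => (pU x).ne'
  have hVm : ContDiff ℝ 2 (fun y => V y ^ m) := hV.rpow_const_of_ne fun x => (pV x).ne'
  have hz : ContDiff ℝ 2 (fun y => U y ^ m - V y ^ m) := hUm.sub hVm
  have hk := kato hz hψ.contDiff hψ.hasCompactSupport hψ.nonneg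
  simp_rw [lapl_sub hUm hVm, sg_rpow_sub_rpow hm0 (pU _) (pV _)] at hk
  refine hk.trans ?_
  set B := Metric.closedBall (0 : Euc N) ρ with hB
  have hBc : IsCompact B := isCompact_closedBall _ _
  have c1 : Continuous (fun x => |U x ^ m - V x ^ m| * lapl ψ x) :=
    hz.continuous.abs.mul (continuous_lapl hψ.contDiff)
  have c2 : Continuous (fun x => |U x - V x| * ψ x) :=
    (hU.continuous.sub hV.continuous).abs.mul hψ.contDiff.continuous
  rw [← setIntegral_eq_integral_of_forall_compl_eq_zero (s := B)
      (f := fun x => |U x ^ m - V x ^ m| * lapl ψ x),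
    ← setIntegral_eq_integral_of_forall_compl_eq_zero (s := B) (f := fun x => |U x - V x| * ψ x)]
  · have i2 := c2.continuousOn.integrableOn_compact (μ := volume) hBc
    calc ∫ x in B, |U x ^ m - V x ^ m| * lapl ψ x
        ≤ ∫ x in B, (m * l * (|U x - V x| * ψ x) + (1 - m) * (K * l ^ (-m)) ^ (1 / (1 - m))) := by
          refine setIntegral_mono_on (c1.continuousOn.integrableOn_compact hBc)
            ((i2.const_mul _).add (integrableOn_const hBc.measure_ne_top))
            hBc.measurableSet fun x _ => ?_
          have hKp : 0 ≤ K * ψ x ^ m :=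
            mul_nonneg hψ.K_nonneg (Real.rpow_nonneg (hψ.nonneg x) _)
          calc |U x ^ m - V x ^ m| * lapl ψ x ≤ |U x ^ m - V x ^ m| * (K * ψ x ^ m) :=
                mul_le_mul_of_nonneg_left (hψ.lapl_le x) (abs_nonneg _)
            _ ≤ |U x - V x| ^ m * (K * ψ x ^ m) :=
                mul_le_mul_of_nonneg_right (abs_rpow_sub_rpow_le hm0 hm1 (pU x) (pV x)) hKp
            _ ≤ _ := young_param hm0 hm1 hl hψ.K_nonneg (abs_nonneg _) (hψ.nonneg x)
      _ = _ := by
          rw [integral_add (i2.const_mul _) (integrableOn_const hBc.measure_ne_top),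
            integral_const_mul, setIntegral_const, errC, smul_eq_mul]
          ring
  · intro x hx
    simp [hψ.eq_zero hx]
  · intro x hx
    rw [lapl_eq_zero_of_notMem_tsupport hψ.contDiff fun h' => hx (hψ.supp h'), mul_zero]

/-! ### Integration in time -/

/-- The fundamental theorem of calculus for `|f|`. -/
lemma abs_sub_abs_eq_integral {f g : ℝ → ℝ} {a b : ℝ} (hab : a ≤ b)
    (hf : ∀ s ∈ Set.Icc a b, HasDerivAt f (g s) s) (hg : ContinuousOn g (Set.Icc a b)) :
    |f b| - |f a| = ∫ s in a..b, g s * sg (f s) := by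
  have hfc : ContinuousOn f (Set.Icc a b) := fun s hs => (hf s hs).continuousAt.continuousWithinAt
  have hc : ∀ n, ContinuousOn (fun s => g s * (f s / rabs (dl n) (f s))) (Set.uIcc a b) := by
    intro n
    rw [Set.uIcc_of_le hab]
    refine hg.mul (hfc.div ((contDiff_rabs (dl_pos n)).continuous.comp_continuousOn hfc) ?_)
    exact fun s _ => (rabs_pos (dl_pos n) _).ne'
  have key : ∀ n, ∫ s in a..b, g s * (f s / rabs (dl n) (f s))
      = rabs (dl n) (f b) - rabs (dl n) (f a) := by
    intro n
    refine intervalIntegral.integral_eq_sub_of_hasDerivAt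
      (f := fun s => rabs (dl n) (f s)) (fun s hs => ?_) (hc n).intervalIntegrable
    rw [Set.uIcc_of_le hab] at hs
    rw [mul_comm]
    exact (hasDerivAt_rabs (dl_pos n) (f s)).comp s (hf s hs)
  have t1 : Tendsto (fun n => rabs (dl n) (f b) - rabs (dl n) (f a)) atTop
      (𝓝 (|f b| - |f a|)) := (tendsto_rabs tendsto_dl _).sub (tendsto_rabs tendsto_dl _)
  have t2 : Tendsto (fun n => ∫ s in a..b, g s * (f s / rabs (dl n) (f s))) atTop
      (𝓝 (∫ s in a..b, g s * sg (f s))) := by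
    refine intervalIntegral.tendsto_integral_filter_of_dominated_convergence (fun s => |g s|)
      ?_ ?_ ?_ ?_
    · refine Eventually.of_forall fun n => ?_
      exact (((hc n).mono Set.uIoc_subset_uIcc).aestronglyMeasurable measurableSet_uIoc)
    · refine Eventually.of_forall fun n => ae_of_all _ fun s _ => ?_
      rw [Real.norm_eq_abs, abs_mul]
      exact mul_le_of_le_one_right (abs_nonneg _) (abs_div_rabs_le (dl_pos n) _)
    · refine ContinuousOn.intervalIntegrable ?_
      rw [Set.uIcc_of_le hab]
      exact hg.abs
    · exact ae_of_all _ fun s _ => tendsto_const_nhds.mul (tendsto_div_rabs tendsto_dl _)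
  simp_rw [key] at t2
  exact tendsto_nhds_unique t1 t2

/-- The time derivative of `∫ |f(·,t)| ψ`, in integrated form. -/
lemma integral_abs_sub_eq {N : ℕ} {m K ρ T : ℝ} {ψ : Euc N → ℝ} (hψ : IsTest m K ρ ψ)
    {f g : Euc N → ℝ → ℝ}
    (hf : ContinuousOn (Function.uncurry f) (Set.univ ×ˢ Set.Ioo 0 T))
    (hg : ContinuousOn (Function.uncurry g) (Set.univ ×ˢ Set.Ioo 0 T))
    (hd : ∀ x, ∀ t ∈ Set.Ioo 0 T, HasDerivAt (f x) (g x t) t)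
    {a b : ℝ} (ha : 0 < a) (hab : a ≤ b) (hb : b < T) :
    IntervalIntegrable (fun s => ∫ x, g x s * sg (f x s) * ψ x) volume a b ∧
    (∫ x, |f x b| * ψ x) - (∫ x, |f x a| * ψ x)
      = ∫ s in a..b, ∫ x, g x s * sg (f x s) * ψ x := by
  set B := Metric.closedBall (0 : Euc N) ρ with hB
  have hBc : IsCompact B := isCompact_closedBall _ _
  have hz : ∀ x ∉ B, ψ x = 0 := fun x hx => hψ.eq_zero hx
  have hsub : Set.Icc a b ⊆ Set.Ioo 0 T := fun s hs => ⟨ha.trans_le hs.1, hs.2.trans_lt hb⟩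
  have hsl : ∀ t ∈ Set.Ioo (0:ℝ) T, Continuous fun x => f x t := by
    intro t ht
    have : Continuous fun x : Euc N => (x, t) := by fun_prop
    exact hf.comp_continuous this fun x => ⟨trivial, ht⟩
  have hslg : ∀ x, ContinuousOn (g x) (Set.Ioo 0 T) := by
    intro x
    have : ContinuousOn (fun t : ℝ => (x, t)) (Set.Ioo 0 T) := by fun_prop
    exact hg.comp this fun t ht => ⟨trivial, ht⟩
  have hint : Integrable (Function.uncurry fun x s => g x s * sg (f x s) * ψ x)
      ((volume.restrict B).prod (volume.restrict (Set.Ioc a b))) := by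
    rw [Measure.prod_restrict]
    have hsub2 : B ×ˢ Set.Icc a b ⊆ Set.univ ×ˢ Set.Ioo 0 T :=
      Set.prod_mono (Set.subset_univ _) hsub
    have hsub3 : B ×ˢ Set.Ioc a b ⊆ B ×ˢ Set.Icc a b :=
      Set.prod_mono subset_rfl Set.Ioc_subset_Icc_self
    have hcψ : Continuous fun p : Euc N × ℝ => ψ p.1 := hψ.contDiff.continuous.comp continuous_fst
    have h1 : IntegrableOn (fun p : Euc N × ℝ => Function.uncurry g p * ψ p.1)
        (B ×ˢ Set.Ioc a b) (volume.prod volume) := by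
      refine IntegrableOn.mono_set ?_ hsub3
      exact ((hg.mono hsub2).mul hcψ.continuousOn).integrableOn_compact (hBc.prod isCompact_Icc)
    have h2 : AEStronglyMeasurable (fun p : Euc N × ℝ => sg (Function.uncurry f p))
        ((volume.prod volume).restrict (B ×ˢ Set.Ioc a b)) := by
      have hm : AEMeasurable (Function.uncurry f)
          ((volume.prod volume).restrict (B ×ˢ Set.Ioc a b)) :=
        (hf.mono (hsub3.trans hsub2)).aemeasurable
          (hBc.measurableSet.prod measurableSet_Ioc)
      have hms : Measurable sg := measurable_id.div measurable_norm
      exact (hms.comp_aemeasurable hm).aestronglyMeasurable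
    refine (Integrable.mul_bdd (c := 1) h1 h2 (ae_of_all _ fun p => abs_sg_le _)).congr ?_
    refine ae_of_all _ fun p => ?_
    simp only [Function.uncurry]
    ring
  have hswap : ∀ s, ∫ x in B, g x s * sg (f x s) * ψ x = ∫ x, g x s * sg (f x s) * ψ x :=
    fun s => setIntegral_eq_integral_of_forall_compl_eq_zero fun x hx => by simp [hz x hx]
  constructor
  · rw [intervalIntegrable_iff_integrableOn_Ioc_of_le hab]
    have := hint.integral_prod_right
    simpa only [Function.uncurry, hswap, IntegrableOn] using this
  · have hi : ∀ t ∈ Set.Ioo (0:ℝ) T, Integrable (fun x => |f x t| * ψ x) volume := fun t ht =>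
      ((hsl t ht).abs.mul hψ.contDiff.continuous).integrable_of_hasCompactSupport
        hψ.hasCompactSupport.mul_left
    rw [← integral_sub (hi b (hsub ⟨hab, le_rfl⟩)) (hi a (hsub ⟨le_rfl, hab⟩)),
      intervalIntegral.integral_of_le hab]
    simp_rw [← hswap]
    rw [← integral_integral_swap hint]
    rw [← setIntegral_eq_integral_of_forall_compl_eq_zero (s := B)]
    · refine integral_congr_ae (ae_of_all _ fun x => ?_)
      have := abs_sub_abs_eq_integral hab (fun s hs => hd x s (hsub hs)) ((hslg x).mono hsub)
      simp only
      rw [← sub_mul, this, integral_mul_const, intervalIntegral.integral_of_le hab]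
    · intro x hx
      simp [hz x hx]

/-- A Gronwall-type bound for `X` on `[0, t₀]`, obtained by evaluating the integral inequality at
a maximum point of `X`. -/
lemma gronwall_max {X : ℝ → ℝ} {T α c t₀ : ℝ} (hα : 0 ≤ α) (hc : 0 ≤ c)
    (hX0 : ∀ t, 0 ≤ X t)
    (hX : ContinuousOn X (Set.Ico 0 T)) (ht0 : t₀ ∈ Set.Ico 0 T)
    (h : ∀ a b, 0 < a → a ≤ b → b < T → X b - X a ≤ ∫ s in a..b, (α * X s + c))
    (hαt : α * t₀ ≤ 1) :
    X t₀ * (1 - α * t₀) ≤ X 0 + c * t₀ := by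
  have hsub : Set.Icc 0 t₀ ⊆ Set.Ico 0 T := fun s hs => ⟨hs.1, hs.2.trans_lt ht0.2⟩
  obtain ⟨τ, hτ, hmax⟩ := isCompact_Icc.exists_isMaxOn (Set.nonempty_Icc.2 ht0.1) (hX.mono hsub)
  have hle : ∀ s ∈ Set.Icc 0 t₀, X s ≤ X τ := fun s hs => hmax hs
  have ht0' := ht0.1
  have key : X τ ≤ X 0 + (α * X τ + c) * t₀ := by
    have hp : 0 ≤ α * X τ + c := by have := hX0 τ; positivity
    rcases hτ.1.eq_or_lt with h0 | h0
    · rw [← h0] at hp ⊢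
      nlinarith [mul_nonneg hp ht0']
    have hev : ∀ᶠ a in 𝓝[>] (0:ℝ), X τ ≤ X a + (α * X τ + c) * t₀ := by
      filter_upwards [Ioo_mem_nhdsGT h0] with a ha
      have h1 := h a τ ha.1 ha.2.le (hτ.2.trans_lt ht0.2)
      have hs2 : Set.Icc a τ ⊆ Set.Icc 0 t₀ := Set.Icc_subset_Icc ha.1.le hτ.2
      have h2 : ∫ s in a..τ, (α * X s + c) ≤ ∫ s in a..τ, (α * X τ + c) := by
        refine intervalIntegral.integral_mono_on ha.2.le ?_ (by simp) fun s hs => ?_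
        · refine ContinuousOn.intervalIntegrable ?_
          rw [Set.uIcc_of_le ha.2.le]
          exact ((hX.mono (hs2.trans hsub)).const_mul α).add continuousOn_const
        · have := hle s (hs2 hs)
          gcongr
      rw [intervalIntegral.integral_const, smul_eq_mul] at h2
      have h3 : (τ - a) * (α * X τ + c) ≤ t₀ * (α * X τ + c) :=
        mul_le_mul_of_nonneg_right (by linarith [ha.1, hτ.2]) hp
      linarith
    have ht : Tendsto X (𝓝[>] 0) (𝓝 (X 0)) := by
      have := (hX 0 ⟨le_rfl, ht0'.trans_lt ht0.2⟩).tendsto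
      refine this.mono_left ?_
      rw [← nhdsWithin_Ioo_eq_nhdsGT (ht0'.trans_lt ht0.2)]
      exact nhdsWithin_mono _ Set.Ioo_subset_Ico_self
    exact ge_of_tendsto (ht.add_const _) hev
  have h4 := hle t₀ ⟨ht0', le_rfl⟩
  have h5 : X t₀ * (1 - α * t₀) ≤ X τ * (1 - α * t₀) :=
    mul_le_mul_of_nonneg_right h4 (by linarith)
  linarith

/-! ### The bound for solutions -/

lemma IsFDESol.contDiffAt {N : ℕ} {m T : ℝ} {u : Euc N → ℝ → ℝ} {u₀ : Euc N → ℝ}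
    (hu : IsFDESol N m T u u₀) (x : Euc N) {t : ℝ} (ht : t ∈ Set.Ioo 0 T) :
    ContDiffAt ℝ 2 (Function.uncurry u) (x, t) := by
  have ho : IsOpen ((Set.univ : Set (Euc N)) ×ˢ Set.Ioo (0:ℝ) T) := isOpen_univ.prod isOpen_Ioo
  exact (hu.2.1.contDiffAt (ho.mem_nhds ⟨trivial, ht⟩)).of_le
    (WithTop.coe_le_coe.2 (le_top : (2 : ℕ∞) ≤ ⊤))

/-- The time derivative of `u`, written through the derivative in space-time. -/
def dt {N : ℕ} (u : Euc N → ℝ → ℝ) (x : Euc N) (t : ℝ) : ℝ :=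
  fderiv ℝ (Function.uncurry u) (x, t) (0, 1)

lemma IsFDESol.hasDerivAt {N : ℕ} {m T : ℝ} {u : Euc N → ℝ → ℝ} {u₀ : Euc N → ℝ}
    (hu : IsFDESol N m T u u₀) (x : Euc N) {t : ℝ} (ht : t ∈ Set.Ioo 0 T) :
    HasDerivAt (u x) (dt u x t) t := by
  have h1 := ((hu.contDiffAt x ht).differentiableAt (by norm_num)).hasFDerivAt
  have h2 : HasDerivAt (fun s : ℝ => (x, s)) ((0 : Euc N), (1:ℝ)) t :=
    (hasDerivAt_const t x).prodMk (hasDerivAt_id t)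
  exact h1.comp_hasDerivAt t h2

lemma IsFDESol.continuousOn_dt {N : ℕ} {m T : ℝ} {u : Euc N → ℝ → ℝ} {u₀ : Euc N → ℝ}
    (hu : IsFDESol N m T u u₀) :
    ContinuousOn (Function.uncurry (dt u)) (Set.univ ×ˢ Set.Ioo 0 T) := by
  have ho : IsOpen ((Set.univ : Set (Euc N)) ×ˢ Set.Ioo (0:ℝ) T) := isOpen_univ.prod isOpen_Ioo
  have := hu.2.1.continuousOn_fderiv_of_isOpen ho (by simp)
  exact this.clm_apply continuousOn_const

lemma IsFDESol.dt_eq {N : ℕ} {m T : ℝ} {u : Euc N → ℝ → ℝ} {u₀ : Euc N → ℝ}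
    (hu : IsFDESol N m T u u₀) (x : Euc N) {t : ℝ} (ht : t ∈ Set.Ioo 0 T) :
    dt u x t = lapl (fun y => u y t ^ m) x := by
  rw [← hu.2.2.2.2 x t ht]
  exact (hu.hasDerivAt x ht).deriv.symm

lemma IsFDESol.contDiff_slice {N : ℕ} {m T : ℝ} {u : Euc N → ℝ → ℝ} {u₀ : Euc N → ℝ}
    (hu : IsFDESol N m T u u₀) {t : ℝ} (ht : t ∈ Set.Ioo 0 T) :
    ContDiff ℝ 2 (fun x => u x t) := by
  refine contDiff_iff_contDiffAt.2 fun x => ?_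
  have h2 : ContDiffAt ℝ 2 (fun x : Euc N => (x, t)) x := by fun_prop
  exact (hu.contDiffAt x ht).comp x h2

/-- The weighted distance `∫ |u - v| ψ` at time `t` is bounded by its initial value, up to the factor
`1 - m l t` and the error `errC`. -/
lemma sol_bound {N : ℕ} {m K ρ l T : ℝ} (hm0 : 0 < m) (hm1 : m < 1) (hl : 0 < l)
    {u v : Euc N → ℝ → ℝ} {u₀ v₀ ψ : Euc N → ℝ} (hψ : IsTest m K ρ ψ)
    (hu : IsFDESol N m T u u₀) (hv : IsFDESol N m T v v₀) {t : ℝ} (ht : t ∈ Set.Ico 0 T)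
    (hlt : m * l * t ≤ 1) :
    (∫ x, |u x t - v x t| * ψ x) * (1 - m * l * t)
      ≤ (∫ x, |u₀ x - v₀ x| * ψ x) + errC N m l K ρ * t := by
  have hIoo : (Set.univ : Set (Euc N)) ×ˢ Set.Ioo (0:ℝ) T ⊆ Set.univ ×ˢ Set.Ico (0:ℝ) T :=
    Set.prod_mono subset_rfl Set.Ioo_subset_Ico_self
  have hfc : ContinuousOn (Function.uncurry fun x t => u x t - v x t)
      (Set.univ ×ˢ Set.Ico (0:ℝ) T) := hu.2.2.1.sub hv.2.2.1
  have hgc : ContinuousOn (Function.uncurry fun x t => dt u x t - dt v x t)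
      (Set.univ ×ˢ Set.Ioo (0:ℝ) T) := hu.continuousOn_dt.sub hv.continuousOn_dt
  have hXc : ContinuousOn (fun t => ∫ x, |u x t - v x t| * ψ x) (Set.Ico 0 T) := by
    refine continuousOn_integral_of_compact_support (isCompact_closedBall (0 : Euc N) ρ) ?_ ?_
    · have h1 : ContinuousOn (fun p : ℝ × Euc N => u p.2 p.1 - v p.2 p.1)
          (Set.Ico 0 T ×ˢ Set.univ) :=
        hfc.comp continuous_swap.continuousOn fun p hp => ⟨trivial, hp.1⟩
      exact h1.abs.mul (hψ.contDiff.continuous.comp continuous_snd).continuousOn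
    · intro p x _ hx
      simp [hψ.eq_zero hx]
  have hC : 0 ≤ errC N m l K ρ := by
    have := hψ.K_nonneg
    have h1 : 0 ≤ 1 - m := by linarith
    unfold errC
    positivity
  have hX0 : ∀ t, 0 ≤ ∫ x, |u x t - v x t| * ψ x := fun t =>
    integral_nonneg fun x => mul_nonneg (abs_nonneg _) (hψ.nonneg x)
  have h := gronwall_max (by positivity : 0 ≤ m * l) hC hX0 hXc ht ?_ hlt
  · simpa only [hu.2.2.2.1, hv.2.2.2.1] using h
  intro a b ha hab hb
  obtain ⟨hi, he⟩ := integral_abs_sub_eq hψ (hfc.mono hIoo) hgc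
    (fun x t ht => (hu.hasDerivAt x ht).sub (hv.hasDerivAt x ht)) ha hab hb
  rw [he]
  refine intervalIntegral.integral_mono_on hab hi ?_ fun s hs => ?_
  · refine ContinuousOn.intervalIntegrable ?_
    rw [Set.uIcc_of_le hab]
    refine ((hXc.mono fun s hs => ?_).const_mul _).add continuousOn_const
    exact ⟨ha.le.trans hs.1, hs.2.trans_lt hb⟩
  · have hs' : s ∈ Set.Ioo 0 T := ⟨ha.trans_le hs.1, hs.2.trans_lt hb⟩
    simp_rw [hu.dt_eq _ hs', hv.dt_eq _ hs']
    exact slice_estimate hm0 hm1 hl hψ (hu.contDiff_slice hs') (hv.contDiff_slice hs')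
      (fun x => hu.1 x s hs') (fun x => hv.1 x s hs')

/-! ### Construction of the test functions -/

lemma hasDerivAt_max_pow (k : ℕ) (r : ℝ) :
    HasDerivAt (fun r : ℝ => max r 0 ^ (k + 2)) (((k : ℝ) + 2) * max r 0 ^ (k + 1)) r := by
  rcases lt_trichotomy r 0 with h | h | h
  · have : (fun r : ℝ => max r 0 ^ (k + 2)) =ᶠ[𝓝 r] fun _ => 0 := by
      filter_upwards [Iio_mem_nhds h] with s hs
      simp [max_eq_right (Set.mem_Iio.1 hs).le]
    rw [max_eq_right h.le]
    simpa using (hasDerivAt_const r (0:ℝ)).congr_of_eventuallyEq this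
  · subst h
    rw [max_self]
    simp only [ne_eq, Nat.add_eq_zero_iff, one_ne_zero, and_false, not_false_eq_true, zero_pow,
      mul_zero]
    -- at the origin the function is dominated by `|r|^(k+2) = o(r)`
    refine HasDerivAt.of_isLittleO ?_
    have h1 : (fun r : ℝ => r ^ (k + 2)) =o[𝓝 0] fun r : ℝ => r ^ 1 :=
      Asymptotics.isLittleO_pow_pow (by omega)
    have h2 : (fun r : ℝ => max r 0 ^ (k + 2)) =O[𝓝 0] fun r : ℝ => r ^ (k + 2) := by
      refine Asymptotics.IsBigO.of_bound 1 (Eventually.of_forall fun r => ?_)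
      simp only [norm_pow, one_mul, Real.norm_eq_abs]
      refine pow_le_pow_left₀ (abs_nonneg _) ?_ _
      rw [abs_of_nonneg (le_max_right r 0)]
      exact max_le (le_abs_self r) (abs_nonneg r)
    simpa using h2.trans_isLittleO h1
  · have : (fun r : ℝ => max r 0 ^ (k + 2)) =ᶠ[𝓝 r] fun r => r ^ (k + 2) := by
      filter_upwards [Ioi_mem_nhds h] with s hs
      rw [max_eq_left (Set.mem_Ioi.1 hs).le]
    rw [max_eq_left h.le]
    have h2 := (hasDerivAt_pow (k + 2) r).congr_of_eventuallyEq this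
    simpa using h2

lemma contDiff_max_pow (k : ℕ) : ContDiff ℝ 2 (fun r : ℝ => max r 0 ^ (k + 3)) := by
  have hd1 : ∀ k : ℕ, deriv (fun r : ℝ => max r 0 ^ (k + 2))
      = fun r => ((k : ℝ) + 2) * max r 0 ^ (k + 1) := fun k =>
    funext fun r => (hasDerivAt_max_pow k r).deriv
  have h1 : ∀ k : ℕ, ContDiff ℝ 1 (fun r : ℝ => max r 0 ^ (k + 2)) := by
    intro k
    refine contDiff_one_iff_deriv.2 ⟨fun r => (hasDerivAt_max_pow k r).differentiableAt, ?_⟩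
    rw [hd1]
    fun_prop
  rw [show (2 : WithTop ℕ∞) = 1 + 1 by norm_num, contDiff_succ_iff_deriv]
  refine ⟨fun r => (hasDerivAt_max_pow (k + 1) r).differentiableAt, by simp, ?_⟩
  have := hd1 (k + 1)
  rw [this]
  exact contDiff_const.mul (h1 k)

/-- The Laplacian of a function of `1 + e‖x‖²`. -/
lemma lapl_radial {N : ℕ} {e : ℝ} (he : 0 < e) {H H1 H2 : ℝ → ℝ}
    (hH : ∀ y, 0 < y → ContDiffAt ℝ 2 H y)
    (h1 : ∀ y, 0 < y → HasDerivAt H (H1 y) y) (h2 : ∀ y, 0 < y → HasDerivAt H1 (H2 y) y) :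
    ContDiff ℝ 2 (fun x : Euc N => H (1 + e * ‖x‖ ^ 2)) ∧
    ∀ x : Euc N, lapl (fun x : Euc N => H (1 + e * ‖x‖ ^ 2)) x
      = 4 * e * (e * ‖x‖ ^ 2) * H2 (1 + e * ‖x‖ ^ 2) + 2 * N * e * H1 (1 + e * ‖x‖ ^ 2) := by
  have hpos : ∀ x : Euc N, 0 < 1 + e * ‖x‖ ^ 2 := fun x => by positivity
  have hin : ContDiff ℝ 2 (fun x : Euc N => 1 + e * ‖x‖ ^ 2) :=
    contDiff_const.add (contDiff_const.mul (contDiff_norm_sq ℝ))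
  have hC : ContDiff ℝ 2 (fun x : Euc N => H (1 + e * ‖x‖ ^ 2)) :=
    contDiff_iff_contDiffAt.2 fun x => (hH _ (hpos x)).comp x hin.contDiffAt
  refine ⟨hC, fun x => ?_⟩
  have hD : ∀ x : Euc N, HasFDerivAt (fun x : Euc N => 1 + e * ‖x‖ ^ 2)
      (e • (2 • innerSL ℝ x)) x := fun x =>
    ((hasStrictFDerivAt_norm_sq x).hasFDerivAt.const_mul e).const_add 1
  have hi : ∀ (x : Euc N) (i : Fin N), innerSL ℝ x (EuclideanSpace.single i 1) = x i := by
    intro x i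
    simp [EuclideanSpace.inner_single_right]
  have hpd : ∀ i, pd i (fun x : Euc N => H (1 + e * ‖x‖ ^ 2))
      = fun x => H1 (1 + e * ‖x‖ ^ 2) * (2 * e * x i) := by
    intro i
    funext x
    have := ((h1 _ (hpos x)).comp_hasFDerivAt x (hD x)).fderiv
    simp only [Function.comp_def] at this
    rw [pd, this]
    simp only [smul_apply, smul_eq_mul, hi, nsmul_eq_mul]
    push_cast
    ring
  have hpp : ∀ i, pd i (pd i (fun x : Euc N => H (1 + e * ‖x‖ ^ 2))) x
      = 4 * e * e * H2 (1 + e * ‖x‖ ^ 2) * (x i) ^ 2 + 2 * e * H1 (1 + e * ‖x‖ ^ 2) := by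
    intro i
    rw [hpd]
    have hc : HasFDerivAt (fun x : Euc N => 2 * e * x i)
        ((2 * e) • (EuclideanSpace.proj i : Euc N →L[ℝ] ℝ)) x :=
      (EuclideanSpace.proj i : Euc N →L[ℝ] ℝ).hasFDerivAt.const_mul (2 * e)
    have := (((h2 _ (hpos x)).comp_hasFDerivAt x (hD x)).mul hc).fderiv
    simp only [Function.comp_def, Pi.mul_def] at this
    rw [pd, this]
    have hs : (EuclideanSpace.proj i : Euc N →L[ℝ] ℝ) (EuclideanSpace.single i 1) = 1 := by simp
    simp only [add_apply, smul_apply, smul_eq_mul, hi, nsmul_eq_mul, hs]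
    push_cast
    ring
  rw [lapl_eq_sum_pd hC, Finset.sum_congr rfl fun i _ => hpp i, Finset.sum_add_distrib,
    ← Finset.mul_sum, ← EuclideanSpace.real_norm_sq_eq]
  simp
  ring

/-- The cutoff factor `(1 - (y/M)^N)₊` with `N = d + 2`. -/
def wM (d : ℕ) (M y : ℝ) : ℝ := max (1 - y ^ (d + 2) / M ^ (d + 2)) 0

/-- The profile `y^(-p) (1 - (y/M)^N)₊^(k+3)` with `N = d + 2`; for `p = d/2` its first factor
composed with `y = 1 + e‖x‖²` is superharmonic. -/
def Hf (d k : ℕ) (p M y : ℝ) : ℝ := y ^ (-p) * wM d M y ^ (k + 3)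

/-- The first derivative of `Hf`. -/
def Hf1 (d k : ℕ) (p M y : ℝ) : ℝ :=
  -p * (y ^ (-p) / y) * wM d M y ^ (k + 3)
    + y ^ (-p) * (-((k + 3) * (d + 2)) * (y ^ (d + 1) / M ^ (d + 2)) * wM d M y ^ (k + 2))

/-- The second derivative of `Hf`. -/
def Hf2 (d k : ℕ) (p M y : ℝ) : ℝ :=
  p * (p + 1) * (y ^ (-p) / y ^ 2) * wM d M y ^ (k + 3)
    + 2 * p * (y ^ (-p) / y) *
      ((k + 3) * (d + 2) * (y ^ (d + 1) / M ^ (d + 2)) * wM d M y ^ (k + 2))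
    - y ^ (-p) * ((k + 3) * (d + 2)) *
      ((d + 1) * y ^ d / M ^ (d + 2) * wM d M y ^ (k + 2)
        - (k + 2) * (d + 2) * (y ^ (d + 1) / M ^ (d + 2)) ^ 2 * wM d M y ^ (k + 1))

lemma hasDerivAt_wM_pow (d k : ℕ) (M y : ℝ) :
    HasDerivAt (fun y => wM d M y ^ (k + 2))
      (-((k + 2) * (d + 2)) * (y ^ (d + 1) / M ^ (d + 2)) * wM d M y ^ (k + 1)) y := by
  have h1 : HasDerivAt (fun y : ℝ => 1 - y ^ (d + 2) / M ^ (d + 2))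
      (-(((d + 2 : ℕ) : ℝ) * y ^ (d + 1) / M ^ (d + 2))) y := by
    simpa using ((hasDerivAt_pow (d + 2) y).div_const (M ^ (d + 2))).const_sub 1
  have := (hasDerivAt_max_pow k (1 - y ^ (d + 2) / M ^ (d + 2))).comp y h1
  refine this.congr_deriv ?_
  simp only [wM]
  push_cast
  ring

lemma hasDerivAt_rpow_neg (p : ℝ) {y : ℝ} (hy : 0 < y) :
    HasDerivAt (fun y : ℝ => y ^ (-p)) (-p * (y ^ (-p) / y)) y := by
  have := Real.hasDerivAt_rpow_const (p := -p) (Or.inl hy.ne')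
  rwa [Real.rpow_sub_one hy.ne'] at this

lemma hasDerivAt_Hf (d k : ℕ) (p M : ℝ) {y : ℝ} (hy : 0 < y) :
    HasDerivAt (Hf d k p M) (Hf1 d k p M y) y := by
  have h := (hasDerivAt_rpow_neg p hy).mul (hasDerivAt_wM_pow d (k + 1) M y)
  refine h.congr_deriv ?_
  simp only [Hf1]
  push_cast
  ring

lemma hasDerivAt_Hf1 (d k : ℕ) (p M : ℝ) {y : ℝ} (hy : 0 < y) :
    HasDerivAt (Hf1 d k p M) (Hf2 d k p M y) y := by
  have ha := hasDerivAt_rpow_neg p hy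
  have hw3 := hasDerivAt_wM_pow d (k + 1) M y
  have hw2 := hasDerivAt_wM_pow d k M y
  have hb := (hasDerivAt_pow (d + 1) y).div_const (M ^ (d + 2))
  have h := (((ha.div (hasDerivAt_id y) hy.ne').const_mul (-p)).mul hw3).add
    (ha.mul ((hb.const_mul (-(((k : ℝ) + 3) * (d + 2)))).mul hw2))
  refine h.congr_deriv ?_
  simp only [Hf2, id, Pi.mul_apply, Pi.div_apply, Nat.add_sub_cancel]
  generalize wM d M y = w
  generalize y ^ (-p) = a
  simp only [div_eq_mul_inv]
  generalize (M ^ (d + 2))⁻¹ = c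
  push_cast
  field_simp
  ring

lemma contDiffAt_Hf (d k : ℕ) (p M : ℝ) {y : ℝ} (hy : 0 < y) :
    ContDiffAt ℝ 2 (Hf d k p M) y := by
  have h1 : ContDiffAt ℝ 2 (fun y : ℝ => y ^ (-p)) y := Real.contDiffAt_rpow_const (Or.inl hy.ne')
  have h2 : ContDiff ℝ 2 (fun y : ℝ => wM d M y ^ (k + 3)) := by
    have : ContDiff ℝ 2 (fun y : ℝ => 1 - y ^ (d + 2) / M ^ (d + 2)) := by fun_prop
    exact (contDiff_max_pow k).comp this
  exact h1.mul h2.contDiffAt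

lemma wM_nonneg (d : ℕ) (M y : ℝ) : 0 ≤ wM d M y := le_max_right _ _

lemma wM_le_one (d : ℕ) {M y : ℝ} (hM : 0 < M) (hy : 0 < y) : wM d M y ≤ 1 :=
  max_le (by have : 0 ≤ y ^ (d + 2) / M ^ (d + 2) := by positivity
             linarith) zero_le_one

lemma wM_eq_zero (d : ℕ) {M y : ℝ} (hM : 0 < M) (hy : M ≤ y) : wM d M y = 0 := by
  refine max_eq_right ?_
  have : 1 ≤ y ^ (d + 2) / M ^ (d + 2) := by
    rw [one_le_div (by positivity)]
    gcongr
  linarith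

/-- The constant in `radial_le`. -/
def Cdk (d k : ℕ) : ℝ :=
  4 * d * ((k + 3) * (d + 2)) + 4 * ((k + 3) * (d + 2) * ((k + 2) * (d + 2)))

/-- For `p = d/2` the term of the Laplacian without derivatives of the cutoff is nonpositive, and the
positive part of the other terms is of order `M^(-p-1)`, since they carry the factor
`y^(d+1) / M^(d+2)`. -/
lemma radial_le (d k : ℕ) {p M y : ℝ} (hp : p = d / 2) (hy : 1 ≤ y) (hM : 1 ≤ M) :
    4 * (y - 1) * Hf2 d k p M y + 2 * (d + 2) * Hf1 d k p M y
      ≤ Cdk d k * (M ^ (-p) / M) * wM d M y ^ (k + 1) := by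
  have hM0 : 0 < M := by linarith
  have hy0 : 0 < y := by linarith
  rcases le_total M y with hMy | hyM
  · simp [Hf1, Hf2, wM_eq_zero d hM0 hMy]
  set w := wM d M y with hw
  have hw0 : 0 ≤ w := wM_nonneg _ _ _
  have hw1 : w ≤ 1 := wM_le_one d hM0 hy0
  set a := y ^ (-p) with ha
  have ha0 : 0 < a := Real.rpow_pos_of_pos hy0 _
  set b := y ^ (d + 1) / M ^ (d + 2) with hb
  have hb0 : 0 < b := by positivity
  have hp0 : 0 ≤ p := by rw [hp]; positivity
  have hd : (d : ℝ) = 2 * p := by rw [hp]; ring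
  have hyb : y * b ≤ 1 := by
    rw [hb, ← mul_div_assoc, ← pow_succ', div_le_one (by positivity)]
    gcongr
  have hab : a * b ≤ M ^ (-p) / M := by
    have h1 : a * y ^ (d + 1) ≤ M ^ (-p) * M ^ (d + 1) := by
      rw [ha, ← Real.rpow_natCast, ← Real.rpow_natCast, ← Real.rpow_add hy0, ← Real.rpow_add hM0]
      refine Real.rpow_le_rpow hy0.le hyM ?_
      push_cast
      linarith
    have h2 : M ^ (-p) / M = M ^ (-p) * M ^ (d + 1) / M ^ (d + 2) := by
      field_simp
      ring
    rw [h2, hb, ← mul_div_assoc]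
    gcongr
  set A := M ^ (-p) / M with hA
  set P := ((k : ℝ) + 3) * (d + 2) with hP
  have hP0 : 0 < P := by positivity
  set R := ((k : ℝ) + 2) * (d + 2) with hR
  have hR0 : 0 < R := by positivity
  have hw2 : w ^ (k + 2) ≤ w ^ (k + 1) := pow_le_pow_of_le_one hw0 hw1 (by omega)
  -- for `p = d/2` the terms in `w ^ (k + 3)` combine to a nonpositive one
  have e : 4 * (y - 1) * Hf2 d k p M y + 2 * (d + 2) * Hf1 d k p M y
      = - (4 * p * (p + 1) * a / y ^ 2 * w ^ (k + 3))
        + (8 * p * (y - 1) / y - 4 * (p + 1)) * (P * (a * b) * w ^ (k + 2))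
        - 4 * (y - 1) * a * P * ((d + 1) * y ^ d / M ^ (d + 2) * w ^ (k + 2))
        + 4 * P * R * (a * b) * ((y - 1) * b) * w ^ (k + 1) := by
    simp only [Hf1, Hf2, ← hw, ← ha, hb, hP, hR, hd]
    clear_value w a
    simp only [div_eq_mul_inv]
    generalize (M ^ (d + 2))⁻¹ = c
    field_simp
    ring
  rw [e]
  have t1 : 0 ≤ 4 * p * (p + 1) * a / y ^ 2 * w ^ (k + 3) := by positivity
  have t3 : 0 ≤ 4 * (y - 1) * a * P * ((d + 1) * y ^ d / M ^ (d + 2) * w ^ (k + 2)) := by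
    have : 0 ≤ y - 1 := by linarith
    positivity
  have t2 : (8 * p * (y - 1) / y - 4 * (p + 1)) * (P * (a * b) * w ^ (k + 2))
      ≤ 8 * p * (P * A * w ^ (k + 1)) := by
    have h1 : 8 * p * (y - 1) / y - 4 * (p + 1) ≤ 8 * p := by
      have : 8 * p * (y - 1) / y ≤ 8 * p := by
        rw [div_le_iff₀ hy0]
        nlinarith
      linarith
    calc _ ≤ 8 * p * (P * (a * b) * w ^ (k + 2)) :=
          mul_le_mul_of_nonneg_right h1 (by positivity)
      _ ≤ _ := by gcongr
  have t4 : 4 * P * R * (a * b) * ((y - 1) * b) * w ^ (k + 1) ≤ 4 * P * R * A * 1 * w ^ (k + 1) := by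
    have h1 : (y - 1) * b ≤ 1 := by nlinarith
    have h2 : 0 ≤ (y - 1) * b := mul_nonneg (by linarith) hb0.le
    have hA0 : 0 ≤ A := by positivity
    gcongr
  have e2 : Cdk d k * A * w ^ (k + 1) = 8 * p * (P * A * w ^ (k + 1))
      + 4 * P * R * A * 1 * w ^ (k + 1) := by
    simp only [Cdk, ← hP, ← hR]
    rw [hd]
    ring
  rw [e2]
  linarith

/-- The test functions obtained from the profile `Hf`. -/
lemma isTest_Hf (d k : ℕ) {m p e M : ℝ} (hm0 : 0 < m) (hk : ((k : ℝ) + 3) * m ≤ k + 1)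
    (hp : p = d / 2) (he : 0 < e) (hM : 1 ≤ M) :
    IsTest m (e * Cdk d k * (M ^ (-p) / M) * M ^ (p * m)) √(M / e)
      (fun x : Euc (d + 2) => Hf d k p M (1 + e * ‖x‖ ^ 2)) := by
  have hM0 : 0 < M := by linarith
  have hp0 : 0 ≤ p := by rw [hp]; positivity
  have hC0 : 0 ≤ Cdk d k := by unfold Cdk; positivity
  have hy : ∀ x : Euc (d + 2), 1 ≤ 1 + e * ‖x‖ ^ 2 := fun x => by
    have : 0 ≤ e * ‖x‖ ^ 2 := by positivity
    linarith
  obtain ⟨hCD, hlap⟩ := lapl_radial (N := d + 2) he (fun y h => contDiffAt_Hf d k p M h)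
    (fun y h => hasDerivAt_Hf d k p M h) (fun y h => hasDerivAt_Hf1 d k p M h)
  refine ⟨hCD, ?_, ?_, ?_, by positivity, ?_⟩
  · refine closure_minimal (fun x hx => ?_) Metric.isClosed_closedBall
    rw [mem_closedBall_zero_iff]
    by_contra! h
    refine hx ?_
    have h1 : M / e < ‖x‖ ^ 2 := (Real.sqrt_lt' (lt_of_le_of_lt (Real.sqrt_nonneg _) h)).1 h
    rw [div_lt_iff₀ he] at h1
    simp [Hf, wM_eq_zero d hM0 (y := 1 + e * ‖x‖ ^ 2) (by linarith)]
  · intro x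
    have := hy x
    have := wM_nonneg d M (1 + e * ‖x‖ ^ 2)
    unfold Hf
    positivity
  · intro x
    have h0 := wM_nonneg d M (1 + e * ‖x‖ ^ 2)
    exact mul_le_one₀ (Real.rpow_le_one_of_one_le_of_nonpos (hy x) (by linarith))
      (pow_nonneg h0 _) (pow_le_one₀ h0 (wM_le_one d hM0 (by linarith [hy x])))
  · intro x
    rw [hlap x]
    have h1 := hy x
    set y := 1 + e * ‖x‖ ^ 2 with hyd
    have hy0 : 0 < y := by linarith
    have e1 : e * ‖x‖ ^ 2 = y - 1 := by rw [hyd]; ring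
    rw [e1]
    have hA0 : 0 ≤ e * Cdk d k * (M ^ (-p) / M) := by positivity
    have hw0 := wM_nonneg d M y
    have key : wM d M y ^ (k + 1) ≤ M ^ (p * m) * Hf d k p M y ^ m := by
      rcases hw0.eq_or_lt with h | h
      · rw [← h, zero_pow (by omega)]
        unfold Hf
        positivity
      · have hyM : y ≤ M := by
          by_contra! h2
          exact h.ne' (wM_eq_zero d hM0 h2.le)
        rw [Hf, Real.mul_rpow (by positivity) (by positivity), ← mul_assoc, ← Real.rpow_mul hy0.le]
        have h3 : 1 ≤ M ^ (p * m) * y ^ (-p * m) := by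
          rw [neg_mul, Real.rpow_neg hy0.le, ← div_eq_mul_inv, one_le_div (by positivity)]
          exact Real.rpow_le_rpow hy0.le hyM (by positivity)
        have h4 : wM d M y ^ (k + 1) ≤ (wM d M y ^ (k + 3)) ^ m := by
          rw [← Real.rpow_natCast, ← Real.rpow_natCast, ← Real.rpow_mul hw0]
          refine Real.rpow_le_rpow_of_exponent_ge h (wM_le_one d hM0 hy0) ?_
          push_cast
          exact hk
        have h5 : 0 ≤ (wM d M y ^ (k + 3)) ^ m := by positivity
        nlinarith
    calc _ = e * (4 * (y - 1) * Hf2 d k p M y + 2 * (d + 2) * Hf1 d k p M y) := by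
          push_cast; ring
      _ ≤ e * (Cdk d k * (M ^ (-p) / M) * wM d M y ^ (k + 1)) := by
          gcongr
          exact radial_le d k hp h1 hM
      _ = e * Cdk d k * (M ^ (-p) / M) * wM d M y ^ (k + 1) := by ring
      _ ≤ e * Cdk d k * (M ^ (-p) / M) * (M ^ (p * m) * Hf d k p M y ^ m) := by gcongr
      _ = _ := by ring

/-- Test functions close to `1` on a given ball can be chosen with an arbitrarily small error
constant: with `s = 1/(1-m)`, the error is of order `M^(1-s)` as `M → ∞`. -/
lemma exists_test {N : ℕ} (hN : 2 ≤ N) {m : ℝ} (hm0 : 0 < m) (hm1 : m < 1) {R θ η : ℝ}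
    (hθ : 0 < θ) (hη : 0 < η) :
    ∃ K ρ, ∃ ψ : Euc N → ℝ, IsTest m K ρ ψ ∧ (∀ x, ‖x‖ ≤ R → 1 - θ ≤ ψ x) ∧
      K ^ (1 / (1 - m)) * volume.real (Metric.closedBall (0 : Euc N) ρ) ≤ η := by
  obtain ⟨d, rfl⟩ : ∃ d, N = d + 2 := ⟨N - 2, by omega⟩
  -- the cutoff power must be large enough for `w^(k+1) ≤ (w^(k+3))^m`
  obtain ⟨k, hk⟩ := exists_nat_ge (2 / (1 - m))
  have hk2 : ((k : ℝ) + 3) * m ≤ k + 1 := by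
    rw [div_le_iff₀ (by linarith)] at hk
    nlinarith
  obtain ⟨p, hp⟩ : ∃ p : ℝ, p = d / 2 := ⟨_, rfl⟩
  have hp0 : 0 ≤ p := by rw [hp]; positivity
  have hC0 : 0 ≤ Cdk d k := by unfold Cdk; positivity
  -- the scale `e` makes the superharmonic factor close to `1` on the given ball; then `M → ∞`
  obtain ⟨e, heY, he⟩ : ∃ e : ℝ, 1 - θ < (1 + e * R ^ 2) ^ (-p) ∧ 0 < e := by
    have hc : ContinuousAt (fun e : ℝ => (1 + e * R ^ 2) ^ (-p)) 0 :=
      ContinuousAt.rpow_const (by fun_prop) (Or.inl (by simp))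
    have h1 : ∀ᶠ e : ℝ in 𝓝[>] 0, 1 - θ < (1 + e * R ^ 2) ^ (-p) :=
      (hc.eventually (lt_mem_nhds (by simpa using hθ))).filter_mono nhdsWithin_le_nhds
    exact (h1.and self_mem_nhdsWithin).exists
  set Y := 1 + e * R ^ 2 with hY
  have hY0 : 0 < Y := by positivity
  have hlim1 : Tendsto (fun M : ℝ => Hf d k p M Y) atTop (𝓝 (Y ^ (-p))) := by
    have h1 : Tendsto (fun M : ℝ => 1 - Y ^ (d + 2) / M ^ (d + 2)) atTop (𝓝 (1 - 0)) :=
      tendsto_const_nhds.sub (tendsto_const_nhds.div_atTop (tendsto_pow_atTop (by omega)))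
    have h2 := (((h1.max (tendsto_const_nhds (x := (0:ℝ)))).pow (k + 3)).const_mul (Y ^ (-p)))
    simpa [Hf, wM] using h2
  set s := 1 / (1 - m) with hs
  have hsm : s * (1 - m) = 1 := by
    rw [hs]
    field_simp [show (1 - m) ≠ 0 by linarith]
  have hs1 : 0 < s - 1 := by
    have h0 : 0 < s := by rw [hs]; exact one_div_pos.2 (by linarith)
    nlinarith
  set V := volume.real (Metric.ball (0 : Euc (d + 2)) 1) with hV
  have hlim2 : Tendsto (fun M : ℝ => (e * Cdk d k * (M ^ (-p) / M) * M ^ (p * m)) ^ s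
      * volume.real (Metric.closedBall (0 : Euc (d + 2)) √(M / e))) atTop (𝓝 0) := by
    have h1 : Tendsto (fun M : ℝ => (e * Cdk d k) ^ s * (e ^ (p + 1))⁻¹ * V * M ^ (-(s - 1))) atTop
        (𝓝 0) := by
      simpa using (tendsto_rpow_neg_atTop hs1).const_mul ((e * Cdk d k) ^ s * (e ^ (p + 1))⁻¹ * V)
    refine h1.congr' ?_
    filter_upwards [eventually_gt_atTop 0] with M hM
    have e1 : volume.real (Metric.closedBall (0 : Euc (d + 2)) √(M / e))
        = M ^ (p + 1) * (e ^ (p + 1))⁻¹ * V := by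
      rw [Measure.addHaar_real_closedBall _ _ (Real.sqrt_nonneg _), finrank_euclideanSpace_fin,
        Real.sqrt_eq_rpow, ← Real.rpow_natCast, ← Real.rpow_mul (by positivity),
        ← div_eq_mul_inv, ← Real.div_rpow hM.le he.le]
      congr 2
      rw [hp]
      push_cast
      ring
    have e2 : e * Cdk d k * (M ^ (-p) / M) * M ^ (p * m)
        = e * Cdk d k * M ^ (-p - 1 + p * m) := by
      rw [Real.rpow_add hM, Real.rpow_sub_one hM.ne']
      ring
    have hE : 0 ≤ e * Cdk d k := by positivity
    rw [e1, e2, Real.mul_rpow hE (Real.rpow_nonneg hM.le _), ← Real.rpow_mul hM.le]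
    have e3 : -(s - 1) = (-p - 1 + p * m) * s + (p + 1) := by linear_combination p * hsm
    rw [e3, Real.rpow_add hM]
    ring
  obtain ⟨M, hM1, hM2, hM⟩ := ((hlim1.eventually (lt_mem_nhds heY)).and
    ((hlim2.eventually (gt_mem_nhds hη)).and (eventually_ge_atTop 1))).exists
  refine ⟨_, _, _, isTest_Hf d k hm0 hk2 hp he hM, fun x hx => hM1.le.trans ?_, hM2.le⟩
  have hyY : 1 + e * ‖x‖ ^ 2 ≤ Y := by rw [hY]; gcongr
  have hy0 : 0 < 1 + e * ‖x‖ ^ 2 := by positivity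
  have h1 : Y ^ (-p) ≤ (1 + e * ‖x‖ ^ 2) ^ (-p) :=
    Real.rpow_le_rpow_of_nonpos hy0 hyY (by linarith)
  have hM0 : 0 < M := by linarith
  have h2 : wM d M Y ≤ wM d M (1 + e * ‖x‖ ^ 2) := by
    unfold wM
    gcongr
  have h3 := wM_nonneg d M Y
  unfold Hf
  gcongr

/-! ### The contraction on balls -/

/-- Letting the test functions increase to `1` gives the contraction on every ball. -/
lemma ball_bound {N : ℕ} (hN : 2 ≤ N) {m T : ℝ} (hm0 : 0 < m) (hm1 : m < 1)
    {u v : Euc N → ℝ → ℝ} {u₀ v₀ : Euc N → ℝ} (hu : IsFDESol N m T u u₀)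
    (hv : IsFDESol N m T v v₀) (hf : Integrable (fun x => u₀ x - v₀ x) volume) {t : ℝ}
    (ht : t ∈ Set.Ico 0 T) (hc : Continuous fun x => |u x t - v x t|) (R : ℝ) :
    ∫ x in Metric.closedBall 0 R, |u x t - v x t| ≤ ∫ x, |u₀ x - v₀ x| := by
  set A := ∫ x, |u₀ x - v₀ x| with hA
  set I := ∫ x in Metric.closedBall 0 R, |u x t - v x t| with hI
  have hI0 : 0 ≤ I := integral_nonneg fun x => abs_nonneg _
  have hB : 0 ≤ A := integral_nonneg fun x => abs_nonneg _
  set s := 1 / (1 - m) with hs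
  have step : ∀ l, 0 < l → m * l * t < 1 → ∀ θ, 0 < θ → ∀ η, 0 < η →
      I * (1 - θ) * (1 - m * l * t) ≤ A + (1 - m) * (l ^ (-m)) ^ s * t * η := by
    intro l hl hlt θ hθ η hη
    obtain ⟨K, ρ, ψ, hψ, hψR, hK⟩ := exists_test hN hm0 hm1 (R := R) hθ hη
    have h1 := sol_bound hm0 hm1 hl hψ hu hv ht hlt.le
    have hψc := hψ.contDiff.continuous
    have hint : Integrable fun x => |u x t - v x t| * ψ x :=
      (hc.mul hψc).integrable_of_hasCompactSupport hψ.hasCompactSupport.mul_left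
    have h2 : I * (1 - θ) ≤ ∫ x, |u x t - v x t| * ψ x := by
      rw [hI, ← integral_mul_const]
      refine le_trans (setIntegral_mono_on ?_ hint.integrableOn measurableSet_closedBall
        (fun x hx => ?_)) (setIntegral_le_integral hint
          (Eventually.of_forall fun x => mul_nonneg (abs_nonneg _) (hψ.nonneg x)))
      · exact (hc.mul continuous_const).continuousOn.integrableOn_compact
          (isCompact_closedBall _ _)
      · exact mul_le_mul_of_nonneg_left (hψR x (mem_closedBall_zero_iff.1 hx)) (abs_nonneg _)
    have h3 : ∫ x, |u₀ x - v₀ x| * ψ x ≤ A := by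
      refine integral_mono_of_nonneg (Eventually.of_forall fun x =>
        mul_nonneg (abs_nonneg _) (hψ.nonneg x)) hf.abs (Eventually.of_forall fun x => ?_)
      exact mul_le_of_le_one_right (abs_nonneg _) (hψ.le_one x)
    have h4 : errC N m l K ρ ≤ (1 - m) * (l ^ (-m)) ^ s * η := by
      rw [errC, Real.mul_rpow hψ.K_nonneg (by positivity)]
      have : 0 ≤ (1 - m) * (l ^ (-m)) ^ s := mul_nonneg (by linarith) (by positivity)
      calc _ = (1 - m) * (l ^ (-m)) ^ s
            * (K ^ s * volume.real (Metric.closedBall (0 : Euc N) ρ)) := by ring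
        _ ≤ _ := by gcongr
    calc _ ≤ (∫ x, |u x t - v x t| * ψ x) * (1 - m * l * t) :=
          mul_le_mul_of_nonneg_right h2 (by linarith)
      _ ≤ _ := h1
      _ ≤ A + ((1 - m) * (l ^ (-m)) ^ s * η) * t := add_le_add h3
          (mul_le_mul_of_nonneg_right h4 ht.1)
      _ = _ := by ring
  -- the limits `η → 0`, `θ → 0`, `l → 0`, in this order
  have step2 : ∀ l, 0 < l → m * l * t < 1 → ∀ θ, 0 < θ → I * (1 - θ) * (1 - m * l * t) ≤ A := by
    intro l hl hlt θ hθ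
    have hlim : Tendsto (fun η => A + (1 - m) * (l ^ (-m)) ^ s * t * η) (𝓝[>] 0) (𝓝 A) := by
      have : ContinuousAt (fun η => A + (1 - m) * (l ^ (-m)) ^ s * t * η) 0 := by fun_prop
      have h := this.tendsto
      simp only [mul_zero, add_zero] at h
      exact h.mono_left nhdsWithin_le_nhds
    refine ge_of_tendsto hlim ?_
    filter_upwards [self_mem_nhdsWithin] with η hη
    exact step l hl hlt θ hθ η hη
  have step3 : ∀ l, 0 < l → m * l * t < 1 → I * (1 - m * l * t) ≤ A := by
    intro l hl hlt
    have hlim : Tendsto (fun θ => I * (1 - θ) * (1 - m * l * t)) (𝓝[>] 0)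
        (𝓝 (I * (1 - m * l * t))) := by
      have : ContinuousAt (fun θ => I * (1 - θ) * (1 - m * l * t)) 0 := by fun_prop
      have h := this.tendsto
      simp only [sub_zero, mul_one] at h
      exact h.mono_left nhdsWithin_le_nhds
    refine le_of_tendsto hlim ?_
    filter_upwards [self_mem_nhdsWithin] with θ hθ
    exact step2 l hl hlt θ hθ
  have hc0 : ContinuousAt (fun l : ℝ => m * l * t) 0 := by fun_prop
  have hlim : Tendsto (fun l => I * (1 - m * l * t)) (𝓝[>] 0) (𝓝 I) := by
    have : ContinuousAt (fun l => I * (1 - m * l * t)) 0 := by fun_prop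
    have h := this.tendsto
    simp only [mul_zero, zero_mul, sub_zero, mul_one] at h
    exact h.mono_left nhdsWithin_le_nhds
  refine le_of_tendsto hlim ?_
  have hsmall : ∀ᶠ l : ℝ in 𝓝[>] 0, m * l * t < 1 :=
    (hc0.eventually (gt_mem_nhds (by simp))).filter_mono nhdsWithin_le_nhds
  filter_upwards [self_mem_nhdsWithin, hsmall] with l hl hlt
  exact step3 l hl hlt

/-- L¹-contraction for solutions bounded below by a Barenblatt solution:
if u₀ - v₀ ∈ L¹ and u, v ≥ B_k on ℝ^N × (0,T), then for every t ∈ [0,T),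
∫ |u(·,t) - v(·,t)| ≤ ∫ |u₀ - v₀|. -/
theorem L1_contraction (N : ℕ) (hN : 3 ≤ N) (m T k : ℝ)
    (hm0 : 0 < m) (hm1 : m < ((N : ℝ) - 2) / N) (hT : 0 < T) (hk : 0 < k)
    (u v : Euc N → ℝ → ℝ) (u₀ v₀ : Euc N → ℝ)
    (hu : IsFDESol N m T u u₀) (hv : IsFDESol N m T v v₀)
    (hf : Integrable (fun x => u₀ x - v₀ x) volume)
    (hub : ∀ x : Euc N, ∀ t ∈ Set.Ioo (0:ℝ) T, Bb N m T k x t ≤ u x t)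
    (hvb : ∀ x : Euc N, ∀ t ∈ Set.Ioo (0:ℝ) T, Bb N m T k x t ≤ v x t) :
    ∀ t ∈ Set.Ico (0:ℝ) T,
      (∫⁻ x, ENNReal.ofReal |u x t - v x t|) ≤ ∫⁻ x, ENNReal.ofReal |u₀ x - v₀ x| := by
  intro t ht
  have hN0 : (0:ℝ) < N := by
    have : 0 < N := by omega
    exact_mod_cast this
  have hm : m < 1 := hm1.trans (by rw [div_lt_one hN0]; linarith)
  have hcont : ∀ {w : Euc N → ℝ → ℝ} {w₀ : Euc N → ℝ}, IsFDESol N m T w w₀ →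
      Continuous fun x => w x t := fun hw =>
    hw.2.2.1.comp_continuous (f := fun x : Euc N => (x, t)) (by fun_prop) fun x => ⟨trivial, ht⟩
  have hc : Continuous fun x => |u x t - v x t| := ((hcont hu).sub (hcont hv)).abs
  rw [← ofReal_integral_eq_lintegral_ofReal hf.abs (Eventually.of_forall fun x => abs_nonneg _),
    ← setLIntegral_univ, ← Metric.iUnion_closedBall_nat (0 : Euc N),
    setLIntegral_iUnion_of_directed]
  · refine iSup_le fun n => ?_
    rw [← ofReal_integral_eq_lintegral_ofReal (hc.continuousOn.integrableOn_compact
      (isCompact_closedBall _ _)) (Eventually.of_forall fun x => abs_nonneg _)]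
    exact ENNReal.ofReal_le_ofReal (ball_bound (by omega) hm0 hm hu hv hf ht hc n)
  · refine Monotone.directed_le fun i j hij => ?_
    exact Metric.closedBall_subset_closedBall (by exact_mod_cast hij)
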